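/- Define φ_1(κ) = κκ† for a Lipschitz spinor κ = (ξ,η), giving the 2×2 matrix [[|ξ|^2, ξ conj(η)],[η conj(ξ), |η|^2]]. Then φ_1 surjects onto the positive light-cone: its image is exactly the set of paravector Hermitian matrices P with pdet(P) = P_{11}P_{22} − P_X conj(P_X) = 0 and trace P_{11} + P_{22} > 0. -/

import Mathlib

open CliffordAlgebra

noncomputable section

namespace PaperCliff

noncomputable instance : Invertible (2 : ℝ) := invertibleOfNonzero two_ne_zero

/-- The quadratic form on `ℝ^{p,q}`: `p` generators of square `+1`, `q` of square `-1`. -/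
def sigQ (p q : ℕ) : QuadraticForm ℝ (Fin (p + q) → ℝ) :=
  QuadraticMap.weightedSumSquares ℝ
    (fun i : Fin (p + q) => if (i : ℕ) < p then (1 : ℝ) else -1)

/-- The negative-definite quadratic form for `Cl(0,n)`. -/
def negQ (n : ℕ) : QuadraticForm ℝ (Fin n → ℝ) :=
  QuadraticMap.weightedSumSquares ℝ (fun _ : Fin n => (-1 : ℝ))

variable {M : Type*} [AddCommGroup M] [Module ℝ M]

/-- Clifford conjugation: composite of the grade involution and reversal. -/
def cconj {Q : QuadraticForm ℝ M} (x : CliffordAlgebra Q) : CliffordAlgebra Q :=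
  reverse (involute x)

/-- The paravectors `ℝ ⊕ ℝ^{p,q}` inside the Clifford algebra. -/
def paravec (Q : QuadraticForm ℝ M) : Submodule ℝ (CliffordAlgebra Q) :=
  LinearMap.range (Algebra.linearMap ℝ (CliffordAlgebra Q)) ⊔ LinearMap.range (ι Q)

/-- The real (degree-zero) component of an element of the Clifford algebra,
via the canonical linear isomorphism with the exterior algebra. -/
def clRe {Q : QuadraticForm ℝ M} (x : CliffordAlgebra Q) : ℝ :=
  ExteriorAlgebra.algebraMapInv (CliffordAlgebra.equivExterior Q x)

/-- The reduced basis monomial `i_{j₁} ⋯ i_{j_k}` for a finite set of indices (in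
increasing order). -/
def mono {m : ℕ} (Q : QuadraticForm ℝ (Fin m → ℝ)) (s : Finset (Fin m)) :
    CliffordAlgebra Q :=
  ((s.sort (· ≤ ·)).map fun j => ι Q (Pi.single j 1)).prod

/-- The (paravector) Lipschitz group, as a subgroup of the units: the group generated by
invertible paravectors. -/
def lipUnits (Q : QuadraticForm ℝ M) : Subgroup (CliffordAlgebra Q)ˣ :=
  Subgroup.closure {u : (CliffordAlgebra Q)ˣ | (u : CliffordAlgebra Q) ∈ paravec Q}

/-- The underlying set of the paravector Lipschitz group `$Γ`. -/
def lipGrp (Q : QuadraticForm ℝ M) : Set (CliffordAlgebra Q) :=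
  {x | ∃ u ∈ lipUnits Q, (u : CliffordAlgebra Q) = x}

/-- The Lipschitz monoid `$Γ^▷ = $Γ ∪ {0}`. -/
def lipMon (Q : QuadraticForm ℝ M) : Set (CliffordAlgebra Q) :=
  insert 0 (lipGrp Q)

/-- A Lipschitz spinor: a pair of elements of the Lipschitz monoid, not both zero,
with `ξ ⬝ conj η` a paravector. -/
def IsSpinor (Q : QuadraticForm ℝ M) (ξ η : CliffordAlgebra Q) : Prop :=
  ξ ∈ lipMon Q ∧ η ∈ lipMon Q ∧ ¬(ξ = 0 ∧ η = 0) ∧ ξ * cconj η ∈ paravec Q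

/-- Membership in `SL(2, $Γ)`: entries in the Lipschitz monoid, pseudo-determinant
`a^* d - c^* b = 1`, and `a b^*, c d^*, c^* a, d^* b` paravectors. -/
def IsSL2 (Q : QuadraticForm ℝ M) (a b c d : CliffordAlgebra Q) : Prop :=
  a ∈ lipMon Q ∧ b ∈ lipMon Q ∧ c ∈ lipMon Q ∧ d ∈ lipMon Q ∧
    reverse a * d - reverse c * b = 1 ∧
    a * reverse b ∈ paravec Q ∧ c * reverse d ∈ paravec Q ∧
    reverse c * a ∈ paravec Q ∧ reverse d * b ∈ paravec Q

theorem cconj_mul' {Q : QuadraticForm ℝ M} (x y : CliffordAlgebra Q) :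
    cconj (x * y) = cconj y * cconj x := by
  simp [cconj, reverse.map_mul]

theorem cconj_cconj' {Q : QuadraticForm ℝ M} (x : CliffordAlgebra Q) :
    cconj (cconj x) = x := by
  simp [cconj, reverse_involute]

theorem cconj_alg {Q : QuadraticForm ℝ M} (r : ℝ) :
    cconj (algebraMap ℝ (CliffordAlgebra Q) r) = algebraMap ℝ _ r := by
  simp [cconj]

theorem cconj_smul' {Q : QuadraticForm ℝ M} (r : ℝ) (x : CliffordAlgebra Q) :
    cconj (r • x) = r • cconj x := by
  simp [cconj]

theorem alg_inj {Q : QuadraticForm ℝ M} {r s : ℝ}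
    (h : algebraMap ℝ (CliffordAlgebra Q) r = algebraMap ℝ _ s) : r = s := by
  have h2 := congrArg (CliffordAlgebra.equivExterior Q) h
  simp only [CliffordAlgebra.equivExterior, CliffordAlgebra.changeFormEquiv_apply,
    CliffordAlgebra.changeForm_algebraMap] at h2
  exact (ExteriorAlgebra.algebraMap_leftInverse M).injective h2

theorem paravec_norm (n : ℕ) (X : CliffordAlgebra (negQ n)) (hX : X ∈ paravec (negQ n)) :
    ∃ r : ℝ, 0 ≤ r ∧ X * cconj X = algebraMap ℝ _ r ∧ cconj X * X = algebraMap ℝ _ r ∧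
      (r = 0 → X = 0) := by
  obtain ⟨y, ⟨a, rfl⟩, z, ⟨v, rfl⟩, rfl⟩ := Submodule.mem_sup.1 hX
  have hq : negQ n v = - ∑ i, v i * v i := by
    simp [negQ, QuadraticMap.weightedSumSquares_apply]
  have hs : 0 ≤ ∑ i, v i * v i := Finset.sum_nonneg fun i _ => mul_self_nonneg _
  have hc : cconj (Algebra.linearMap ℝ (CliffordAlgebra (negQ n)) a + ι (negQ n) v)
      = algebraMap ℝ _ a - ι (negQ n) v := by
    simp [cconj, sub_eq_add_neg]
  have hcomm := Algebra.commutes a (ι (negQ n) v)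
  refine ⟨a * a + ∑ i, v i * v i, add_nonneg (mul_self_nonneg a) hs, ?_, ?_, ?_⟩
  · rw [hc, Algebra.linearMap_apply, add_mul, mul_sub, mul_sub, ι_sq_scalar, hq, hcomm, map_neg, map_add, map_mul]
    abel
  · rw [hc, Algebra.linearMap_apply, sub_mul, mul_add, mul_add, ι_sq_scalar, hq, hcomm, map_neg, map_add, map_mul]
    abel
  · intro h
    have ha : a * a = 0 := by nlinarith [mul_self_nonneg a]
    have hv : ∑ i, v i * v i = 0 := by linarith
    have ha' : a = 0 := mul_self_eq_zero.1 ha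
    have hv' : v = 0 := by
      funext i
      have := (Finset.sum_eq_zero_iff_of_nonneg (fun i _ => mul_self_nonneg (v i))).1 hv i
        (Finset.mem_univ i)
      exact mul_self_eq_zero.1 this
    simp [ha', hv']

theorem lipUnits_norm (n : ℕ) (u : (CliffordAlgebra (negQ n))ˣ) (hu : u ∈ lipUnits (negQ n)) :
    ∃ r : ℝ, 0 < r ∧ (u : CliffordAlgebra (negQ n)) * cconj (u : CliffordAlgebra (negQ n))
        = algebraMap ℝ _ r ∧
      cconj (u : CliffordAlgebra (negQ n)) * (u : CliffordAlgebra (negQ n))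
        = algebraMap ℝ _ r := by
  unfold lipUnits at hu
  induction hu using Subgroup.closure_induction with
  | mem x hx =>
    obtain ⟨r, h0, h1, h2, h3⟩ := paravec_norm n x hx
    have : Nontrivial (CliffordAlgebra (negQ n)) :=
      Function.Injective.nontrivial (f := algebraMap ℝ _) fun _ _ => alg_inj
    refine ⟨r, lt_of_le_of_ne h0 fun h => x.ne_zero (h3 h.symm), h1, h2⟩
  | one =>
    refine ⟨1, one_pos, ?_, ?_⟩ <;> simp [cconj]
  | mul x y _ _ hx hy =>
    obtain ⟨r, r0, r1, r2⟩ := hx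
    obtain ⟨s, s0, s1, s2⟩ := hy
    refine ⟨r * s, mul_pos r0 s0, ?_, ?_⟩
    · rw [Units.val_mul, cconj_mul', mul_assoc, ← mul_assoc (y : CliffordAlgebra (negQ n)), s1,
        Algebra.commutes, ← mul_assoc, r1, map_mul]
    · rw [Units.val_mul, cconj_mul', mul_assoc,
        ← mul_assoc (cconj (x : CliffordAlgebra (negQ n))), r2,
        Algebra.commutes, ← mul_assoc, s2, ← map_mul, mul_comm]
  | inv x _ hx =>
    obtain ⟨r, r0, r1, r2⟩ := hx
    have hr : algebraMap ℝ (CliffordAlgebra (negQ n)) r⁻¹ * algebraMap ℝ _ r = 1 := by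
      rw [← map_mul, inv_mul_cancel₀ r0.ne', map_one]
    have hi : ((x⁻¹ : (CliffordAlgebra (negQ n))ˣ) : CliffordAlgebra (negQ n))
        = algebraMap ℝ _ r⁻¹ * cconj (x : CliffordAlgebra (negQ n)) := by
      apply Units.inv_eq_of_mul_eq_one_left
      rw [mul_assoc, r2, hr]
    refine ⟨r⁻¹, inv_pos.2 r0, ?_, ?_⟩
    · rw [hi, cconj_mul', cconj_cconj', cconj_alg, mul_assoc,
        ← mul_assoc (cconj (x : CliffordAlgebra (negQ n))), r2,
        ← map_mul, mul_inv_cancel₀ r0.ne', map_one, mul_one]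
    · rw [hi, cconj_mul', cconj_cconj', cconj_alg, ← Algebra.commutes, mul_assoc,
        ← mul_assoc (x : CliffordAlgebra (negQ n)), ← Algebra.commutes, mul_assoc, r1, hr, mul_one]

theorem lipMon_norm (n : ℕ) (x : CliffordAlgebra (negQ n)) (hx : x ∈ lipMon (negQ n)) :
    ∃ r : ℝ, 0 ≤ r ∧ x * cconj x = algebraMap ℝ _ r ∧ cconj x * x = algebraMap ℝ _ r ∧
      (r = 0 → x = 0) := by
  rcases hx with rfl | ⟨u, hu, rfl⟩
  · exact ⟨0, le_rfl, by simp, by simp, fun _ => rfl⟩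
  · obtain ⟨r, r0, r1, r2⟩ := lipUnits_norm n u hu
    exact ⟨r, r0.le, r1, r2, fun h => absurd h r0.ne'⟩

theorem paravec_lipMon (n : ℕ) (X : CliffordAlgebra (negQ n)) (hX : X ∈ paravec (negQ n)) :
    X ∈ lipMon (negQ n) := by
  obtain ⟨r, h0, h1, h2, h3⟩ := paravec_norm n X hX
  by_cases hr : r = 0
  · exact Or.inl (h3 hr)
  · have e : algebraMap ℝ (CliffordAlgebra (negQ n)) r⁻¹ * algebraMap ℝ _ r = 1 := by
      rw [← map_mul, inv_mul_cancel₀ hr, map_one]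
    refine Or.inr ⟨⟨X, algebraMap ℝ _ r⁻¹ * cconj X, ?_, ?_⟩, Subgroup.subset_closure ?_, rfl⟩
    · rw [← mul_assoc, ← Algebra.commutes, mul_assoc, h1, e]
    · rw [mul_assoc, h2, e]
    · exact hX

theorem alg_paravec {Q : QuadraticForm ℝ M} (r : ℝ) :
    algebraMap ℝ (CliffordAlgebra Q) r ∈ paravec Q :=
  Submodule.mem_sup_left ⟨r, rfl⟩

/-- The map `φ₁(κ) = κ κ†` surjects onto the positive light-cone: a
paravector Hermitian matrix `[[t₁₁, X],[conj X, t₂₂]]` (with `t₁₁, t₂₂ ∈ ℝ` and `X` a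
paravector) is of the form `[[|ξ|², ξ conj η],[η conj ξ, |η|²]]` for some Lipschitz spinor
`(ξ,η)` if and only if its pseudo-determinant `t₁₁ t₂₂ − X conj X` vanishes and its trace
`t₁₁ + t₂₂` is positive. -/
theorem basepoint_image_is_lightcone (n : ℕ) (t₁₁ t₂₂ : ℝ)
    (X : CliffordAlgebra (negQ n)) (hX : X ∈ paravec (negQ n)) :
    (∃ ξ η : CliffordAlgebra (negQ n), IsSpinor (negQ n) ξ η ∧
        ξ * cconj ξ = algebraMap ℝ (CliffordAlgebra (negQ n)) t₁₁ ∧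
        η * cconj η = algebraMap ℝ (CliffordAlgebra (negQ n)) t₂₂ ∧
        ξ * cconj η = X) ↔
      (X * cconj X = algebraMap ℝ (CliffordAlgebra (negQ n)) (t₁₁ * t₂₂) ∧
        0 < t₁₁ + t₂₂) := by
  constructor
  · rintro ⟨ξ, η, ⟨hξ, hη, hne, -⟩, e1, e2, rfl⟩
    obtain ⟨r, r0, r1, r2, r3⟩ := lipMon_norm n ξ hξ
    obtain ⟨s, s0, s1, s2, s3⟩ := lipMon_norm n η hη
    obtain rfl : t₁₁ = r := alg_inj (e1.symm.trans r1)
    obtain rfl : t₂₂ = s := alg_inj (e2.symm.trans s1)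
    constructor
    · rw [cconj_mul', cconj_cconj', mul_assoc, ← mul_assoc (cconj η), s2, Algebra.commutes,
        ← mul_assoc, r1, map_mul]
    · refine lt_of_le_of_ne (add_nonneg r0 s0) fun h => hne ⟨r3 ?_, s3 ?_⟩ <;> linarith
  · rintro ⟨h, hpos⟩
    obtain ⟨r, r0, r1, r2, r3⟩ := paravec_norm n X hX
    obtain rfl : t₁₁ * t₂₂ = r := alg_inj (h.symm.trans r1)
    have : Nontrivial (CliffordAlgebra (negQ n)) :=
      Function.Injective.nontrivial (f := algebraMap ℝ _) fun _ _ => alg_inj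
    have key : ∀ r : ℝ, 0 < r → algebraMap ℝ (CliffordAlgebra (negQ n)) (√r) ≠ 0 := by
      intro r hr h0
      exact (Real.sqrt_pos.2 hr).ne' (alg_inj (h0.trans (map_zero _).symm))
    have t2 : 0 ≤ t₂₂ := by
      by_contra hlt
      push Not at hlt
      have : 0 < t₁₁ := by linarith
      nlinarith [mul_neg_of_pos_of_neg this hlt]
    rcases t2.eq_or_lt with h2 | h2
    · obtain rfl := h2
      have hX0 : X = 0 := r3 (by simp)
      have t1 : 0 < t₁₁ := by linarith
      refine ⟨algebraMap ℝ _ (√t₁₁), 0, ⟨paravec_lipMon n _ (alg_paravec _), Or.inl rfl,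
        fun h => key _ t1 h.1, ?_⟩, ?_, ?_, ?_⟩
      · simp [cconj]
      · rw [cconj_alg, ← map_mul, Real.mul_self_sqrt t1.le]
      · simp
      · simp [cconj, hX0]
    · have hs := Real.sqrt_pos.2 h2
      have e : ((√t₂₂)⁻¹ • X) * cconj (algebraMap ℝ (CliffordAlgebra (negQ n)) (√t₂₂)) = X := by
        rw [cconj_alg, ← Algebra.commutes, ← Algebra.smul_def, smul_smul,
          mul_inv_cancel₀ hs.ne', one_smul]
      refine ⟨(√t₂₂)⁻¹ • X, algebraMap ℝ _ (√t₂₂),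
        ⟨paravec_lipMon n _ (Submodule.smul_mem _ _ hX), paravec_lipMon n _ (alg_paravec _),
        fun h => key _ h2 h.2, ?_⟩, ?_, ?_, e⟩
      · rw [e]; exact hX
      · rw [cconj_smul', smul_mul_smul_comm, r1, Algebra.smul_def, ← map_mul, ← mul_inv,
          Real.mul_self_sqrt h2.le]
        congr 1
        field_simp
      · rw [cconj_alg, ← map_mul, Real.mul_self_sqrt h2.le]


end PaperCliff
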